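/- Let G be a connected bipartite finite simple graph on vertex set V = {v_1,...,v_n} with bipartition (V_1, V_2), let A be a proper subset of V_1, and suppose F = H_A ∩ R+A is a facet of the edge cone. If N(A) is a proper subset of V_2, then F = H_{V_2 \ N(A)} ∩ R+A and N(V_2 \ N(A)) = V_1 \ A. -/

import Mathlib

open Finset

/-- The edge vector `e_i + e_j` associated to an edge `{i, j}`. -/
def edgeVector {V : Type*} [DecidableEq V] (i j : V) : V → ℝ :=
  fun k => (if k = i then 1 else 0) + (if k = j then 1 else 0)

/-- The edge cone of a graph `G`: all nonnegative real linear combinations of the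
edge vectors of `G`. -/
def edgeCone {V : Type*} [Fintype V] [DecidableEq V] (G : SimpleGraph V) :
    Set (V → ℝ) :=
  { x | ∃ c : V → V → ℝ, (∀ i j, 0 ≤ c i j) ∧ (∀ i j, ¬ G.Adj i j → c i j = 0) ∧
        x = ∑ i, ∑ j, c i j • edgeVector i j }

/-- The neighbor set `N(A)`: vertices adjacent to at least one vertex of `A`. -/
def nbr {V : Type*} [Fintype V] [DecidableEq V] (G : SimpleGraph V)
    [DecidableRel G.Adj] (A : Finset V) : Finset V :=
  Finset.univ.filter fun v => ∃ a ∈ A, G.Adj v a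

/-- `A` is an independent set of vertices of `G`. -/
def IsIndep {V : Type*} (G : SimpleGraph V) (A : Finset V) : Prop :=
  ∀ a ∈ A, ∀ b ∈ A, ¬ G.Adj a b

/-- `F` is a face of the cone `Q`: `F = Q ∩ {x | ⟪x, a⟫ = 0}` for some `a` with
`Q ⊆ {x | ⟪x, a⟫ ≤ 0}`. -/
def IsFace {V : Type*} [Fintype V] (Q F : Set (V → ℝ)) : Prop :=
  ∃ a : V → ℝ, (∀ x ∈ Q, ∑ i, x i * a i ≤ 0) ∧ F = Q ∩ {x | ∑ i, x i * a i = 0}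

/-- `F` is a facet of the cone `Q`: a face whose linear span has dimension one less
than the dimension of the linear span of `Q`. -/
def IsFacet {V : Type*} [Fintype V] (Q F : Set (V → ℝ)) : Prop :=
  IsFace Q F ∧
    Module.finrank ℝ (Submodule.span ℝ F) = Module.finrank ℝ (Submodule.span ℝ Q) - 1

/-! Every `x` in the edge cone satisfies `∑ i ∈ S, x i ≤ ∑ i ∈ N(S), x i`, for every `S`. If some
`u ∈ V₁ \ A` had all its neighbors in `N(A)`, then `N(A ∪ {u}) = N(A)`, and the inequality for
`A ∪ {u}` would force `x u = 0` on `F`. So the equality for `A ∪ {u}` would hold on `F`, and also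
on any edge vector at `u`; such a vector lies outside the span of `F`, so, `F` being a facet, the
equality would hold on the whole cone. No edge could then leave `A ∪ {u} ∪ N(A)`, and connectedness
would give `N(A) = V₂`. Hence `N(V₂ \ N(A)) = V₁ \ A`, and the two hyperplanes meet the cone in
the same set because `∑ i ∈ V₁, x i = ∑ i ∈ V₂, x i` on the cone. -/

section LinearAlgebra

open Module Submodule

theorem sup_span_singleton_eq_of_finrank_le_add_one {K E : Type*} [DivisionRing K]
    [AddCommGroup E] [Module K E] [Module.Finite K E] {W U : Submodule K E} {v : E}
    (hWU : W ≤ U) (hvU : v ∈ U) (hvW : v ∉ W) (hrank : finrank K U ≤ finrank K W + 1) :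
    W ⊔ K ∙ v = U :=
  eq_of_le_of_finrank_le (sup_le hWU ((span_singleton_le_iff_mem v U).2 hvU))
    (hrank.trans_eq (finrank_sup_span_singleton hvW).symm)

theorem notMem_span_of_map_ne_zero {R M N : Type*} [Semiring R] [AddCommMonoid M] [Module R M]
    [AddCommMonoid N] [Module R N] {s : Set M} {f : M →ₗ[R] N} (hf : ∀ x ∈ s, f x = 0) {v : M}
    (hfv : f v ≠ 0) : v ∉ span R s := fun hv ↦
  hfv ((span_le (p := LinearMap.ker f)).2 hf hv)

theorem IsFacet.subset {V : Type*} [Fintype V] {Q F : Set (V → ℝ)} (hF : IsFacet Q F) :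
    F ⊆ Q := by
  obtain ⟨⟨_, -, hFQ⟩, -⟩ := hF
  exact hFQ.trans_subset Set.inter_subset_left

theorem IsFacet.map_eq_zero {V E : Type*} [Fintype V] [AddCommGroup E] [Module ℝ E]
    {Q F : Set (V → ℝ)} (hF : IsFacet Q F) {f : (V → ℝ) →ₗ[ℝ] E} (hf : ∀ x ∈ F, f x = 0)
    {v : V → ℝ} (hvQ : v ∈ Q) (hvF : v ∉ span ℝ F) (hfv : f v = 0) {x : V → ℝ} (hx : x ∈ Q) :
    f x = 0 := by
  have hrank : finrank ℝ (span ℝ F) = finrank ℝ (span ℝ Q) - 1 := hF.2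
  have hspan : span ℝ F ⊔ ℝ ∙ v = span ℝ Q :=
    sup_span_singleton_eq_of_finrank_le_add_one (span_mono hF.subset) (subset_span hvQ) hvF
      (by omega)
  have hker : span ℝ F ⊔ ℝ ∙ v ≤ LinearMap.ker f :=
    sup_le (span_le.2 hf) ((span_singleton_le_iff_mem v _).2 hfv)
  exact hker (hspan.ge (subset_span hx))

end LinearAlgebra

theorem sum_eq_sum_iff_sum_sdiff_eq_sum_sdiff {ι M : Type*} [DecidableEq ι] [AddCommGroup M]
    {s t A B : Finset ι} {f : ι → M} (hA : A ⊆ s) (hB : B ⊆ t)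
    (hst : ∑ i ∈ s, f i = ∑ i ∈ t, f i) :
    ∑ i ∈ A, f i = ∑ i ∈ B, f i ↔ ∑ i ∈ t \ B, f i = ∑ i ∈ s \ A, f i := by
  rw [sum_sdiff_eq_sub hA, sum_sdiff_eq_sub hB, hst, sub_right_inj, eq_comm]

section EdgeCone

variable {V : Type*} [DecidableEq V]

theorem sum_edgeVector (S : Finset V) (i j : V) :
    ∑ k ∈ S, edgeVector i j k = (if i ∈ S then 1 else 0) + (if j ∈ S then 1 else 0) := by
  simp [edgeVector, sum_add_distrib]

theorem edgeVector_left_ne_zero (i j : V) : edgeVector i j i ≠ 0 := by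
  rw [edgeVector, if_pos rfl]
  positivity

variable [Fintype V] {G : SimpleGraph V}

theorem edgeVector_mem_edgeCone {i j : V} (hij : G.Adj i j) : edgeVector i j ∈ edgeCone G := by
  refine ⟨fun a b ↦ if a = i ∧ b = j then 1 else 0, fun a b ↦ by positivity,
    fun a b hab ↦ if_neg ?_, ?_⟩
  · rintro ⟨rfl, rfl⟩
    exact hab hij
  · simp [ite_and, sum_ite_eq']

theorem map_nonneg_of_mem_edgeCone {f : (V → ℝ) →ₗ[ℝ] ℝ}
    (hf : ∀ i j, G.Adj i j → 0 ≤ f (edgeVector i j)) {x : V → ℝ} (hx : x ∈ edgeCone G) :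
    0 ≤ f x := by
  obtain ⟨c, hc, hcG, rfl⟩ := hx
  simp only [map_sum, map_smul, smul_eq_mul]
  refine sum_nonneg fun i _ ↦ sum_nonneg fun j _ ↦ ?_
  by_cases hij : G.Adj i j
  · exact mul_nonneg (hc i j) (hf i j hij)
  · simp [hcG i j hij]

theorem nonneg_of_mem_edgeCone {x : V → ℝ} (hx : x ∈ edgeCone G) : 0 ≤ x := fun v ↦
  map_nonneg_of_mem_edgeCone (f := LinearMap.proj v)
    (fun i j _ ↦ by simp only [LinearMap.proj_apply, edgeVector]; positivity) hx

end EdgeCone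

section Neighbors

variable {V : Type*} [Fintype V] [DecidableEq V] {G : SimpleGraph V} [DecidableRel G.Adj]
  {V₁ V₂ S A : Finset V}

theorem mem_nbr {v : V} : v ∈ nbr G S ↔ ∃ a ∈ S, G.Adj v a := by
  simp [nbr]

theorem mem_nbr_of_adj {i j : V} (hi : i ∈ S) (hij : G.Adj i j) : j ∈ nbr G S :=
  mem_nbr.2 ⟨i, hi, hij.symm⟩

theorem nbr_subset (hbip : G.IsBipartiteWith (V₁ : Set V) V₂) (hS : S ⊆ V₁) : nbr G S ⊆ V₂ := by
  intro v hv
  obtain ⟨a, ha, hva⟩ := mem_nbr.1 hv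
  exact hbip.mem_of_mem_adj (hS ha) hva.symm

theorem disjoint_nbr (hbip : G.IsBipartiteWith (V₁ : Set V) V₂) (hS : S ⊆ V₁) :
    Disjoint S (nbr G S) :=
  (disjoint_coe.1 hbip.disjoint).mono hS (nbr_subset hbip hS)

theorem nbr_sdiff_nbr_subset (hbip : G.IsBipartiteWith (V₁ : Set V) V₂) :
    nbr G (V₂ \ nbr G A) ⊆ V₁ \ A := by
  refine subset_sdiff.2 ⟨nbr_subset hbip.symm sdiff_subset, disjoint_left.2 fun v hv hvA ↦ ?_⟩
  obtain ⟨b, hb, hvb⟩ := mem_nbr.1 hv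
  exact (mem_sdiff.1 hb).2 (mem_nbr_of_adj hvA hvb)

theorem nbr_insert_of_notMem_nbr_sdiff_nbr (hbip : G.IsBipartiteWith (V₁ : Set V) V₂) {u : V}
    (hu : u ∈ V₁) (huN : u ∉ nbr G (V₂ \ nbr G A)) : nbr G (insert u A) = nbr G A := by
  ext w
  simp only [mem_nbr, exists_mem_insert, or_iff_right_iff_imp]
  intro hwu
  by_contra hw
  exact huN (mem_nbr_of_adj
    (mem_sdiff.2 ⟨hbip.mem_of_mem_adj hu hwu.symm, fun h ↦ hw (mem_nbr.1 h)⟩) hwu)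

end Neighbors

section NbrExcess

variable {V : Type*} [Fintype V] [DecidableEq V]

/-- The linear form `x ↦ ∑ i ∈ N(S), x i - ∑ i ∈ S, x i`, whose kernel is the hyperplane `H_S`. -/
def nbrExcess (G : SimpleGraph V) [DecidableRel G.Adj] (S : Finset V) : (V → ℝ) →ₗ[ℝ] ℝ :=
  ∑ i ∈ nbr G S, LinearMap.proj i - ∑ i ∈ S, LinearMap.proj i

variable {G : SimpleGraph V} [DecidableRel G.Adj] {V₁ V₂ S A : Finset V} {x : V → ℝ}

theorem nbrExcess_apply (S : Finset V) (x : V → ℝ) :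
    nbrExcess G S x = ∑ i ∈ nbr G S, x i - ∑ i ∈ S, x i := by
  simp [nbrExcess]

theorem nbrExcess_eq_zero_iff :
    nbrExcess G S x = 0 ↔ ∑ i ∈ S, x i = ∑ i ∈ nbr G S, x i := by
  rw [nbrExcess_apply, sub_eq_zero, eq_comm]

theorem nbrExcess_edgeVector_of_mem {i j : V} (hi : i ∈ S) (hij : G.Adj i j)
    (hS : Disjoint S (nbr G S)) : nbrExcess G S (edgeVector i j) = 0 := by
  have hj : j ∈ nbr G S := mem_nbr_of_adj hi hij
  simp [nbrExcess_apply, sum_edgeVector, hi, hj, disjoint_left.1 hS hi, disjoint_right.1 hS hj]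

theorem mem_of_nbrExcess_edgeVector_eq_zero {i j : V} (hi : i ∈ nbr G S) (hiS : i ∉ S)
    (h : nbrExcess G S (edgeVector i j) = 0) : j ∈ S := by
  by_contra hj
  simp only [nbrExcess_apply, sum_edgeVector, hi, hiS, hj, if_true, if_false] at h
  split_ifs at h <;> norm_num at h

theorem nbrExcess_nonneg (S : Finset V) (hx : x ∈ edgeCone G) : 0 ≤ nbrExcess G S x := by
  refine map_nonneg_of_mem_edgeCone (fun i j hij ↦ ?_) hx
  have hi : i ∈ S → j ∈ nbr G S := fun h ↦ mem_nbr_of_adj h hij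
  have hj : j ∈ S → i ∈ nbr G S := fun h ↦ mem_nbr_of_adj h hij.symm
  rw [nbrExcess_apply, sum_edgeVector, sum_edgeVector]
  grind

theorem sum_le_sum_nbr (S : Finset V) (hx : x ∈ edgeCone G) :
    ∑ i ∈ S, x i ≤ ∑ i ∈ nbr G S, x i :=
  sub_nonneg.1 ((nbrExcess_nonneg S hx).trans_eq (nbrExcess_apply S x))

theorem nbrExcess_insert_of_nbr_insert_eq {u : V} (hu : u ∉ A)
    (hN : nbr G (insert u A) = nbr G A) (x : V → ℝ) :
    nbrExcess G (insert u A) x = nbrExcess G A x - x u := by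
  rw [nbrExcess_apply, nbrExcess_apply, hN, sum_insert hu]
  ring

theorem apply_eq_zero_of_nbr_insert_eq {u : V} (hu : u ∉ A)
    (hN : nbr G (insert u A) = nbr G A) (hx : x ∈ edgeCone G) (hxA : nbrExcess G A x = 0) :
    x u = 0 := by
  have hle : 0 ≤ nbrExcess G A x - x u :=
    (nbrExcess_nonneg (insert u A) hx).trans_eq (nbrExcess_insert_of_nbr_insert_eq hu hN x)
  exact le_antisymm (by linarith) (nonneg_of_mem_edgeCone hx u)

theorem nbr_eq_of_nbrExcess_eq_zero (hG : G.Preconnected)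
    (hbip : G.IsBipartiteWith (V₁ : Set V) V₂) (hS : S ⊆ V₁) (hne : S.Nonempty)
    (hzero : ∀ x ∈ edgeCone G, nbrExcess G S x = 0) : nbr G S = V₂ := by
  refine (nbr_subset hbip hS).antisymm fun b hb ↦ ?_
  by_contra hbN
  have hbS : b ∉ S := fun h ↦ Set.disjoint_left.1 hbip.disjoint (hS h) hb
  obtain ⟨a, ha⟩ := hne
  obtain ⟨p⟩ := hG a b
  obtain ⟨⟨⟨i, j⟩, hij⟩, -, hi, hj⟩ :=
    p.exists_boundary_dart (S ∪ nbr G S : Finset V) (by simp [ha]) (by simp [hbS, hbN])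
  simp only [coe_union, Set.mem_union, mem_coe, not_or] at hi hj
  rcases hi with hi | hi
  · exact hj.2 (mem_nbr_of_adj hi hij)
  · exact hj.1 (mem_of_nbrExcess_edgeVector_eq_zero hi (disjoint_right.1 (disjoint_nbr hbip hS) hi)
      (hzero _ (edgeVector_mem_edgeCone hij)))

theorem nbr_insert_ne_of_isFacet (hG : G.Preconnected)
    (hbip : G.IsBipartiteWith (V₁ : Set V) V₂) (hA : A ⊆ V₁) (hNA : nbr G A ≠ V₂)
    {F : Set (V → ℝ)} (hF : IsFacet (edgeCone G) F) (hFA : ∀ x ∈ F, nbrExcess G A x = 0)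
    {u : V} (hu : u ∈ V₁ \ A) : nbr G (insert u A) ≠ nbr G A := by
  intro hN
  obtain ⟨huV, huA⟩ := mem_sdiff.1 hu
  have hS : insert u A ⊆ V₁ := insert_subset huV hA
  obtain ⟨w, huw⟩ : ∃ w, G.Adj u w := by
    obtain ⟨b, hb, -⟩ := exists_of_ssubset ((nbr_subset hbip hA).ssubset_of_ne hNA)
    have : Nontrivial V := ⟨u, b, hbip.disjoint.ne_of_mem huV hb⟩
    exact hG.exists_adj_of_nontrivial u
  have hFu : ∀ x ∈ F, x u = 0 := fun x hx ↦
    apply_eq_zero_of_nbr_insert_eq huA hN (hF.subset hx) (hFA x hx)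
  have hFS : ∀ x ∈ F, nbrExcess G (insert u A) x = 0 := fun x hx ↦ by
    rw [nbrExcess_insert_of_nbr_insert_eq huA hN, hFA x hx, hFu x hx, sub_zero]
  have hw : edgeVector u w ∉ Submodule.span ℝ F :=
    notMem_span_of_map_ne_zero (f := LinearMap.proj u) hFu (edgeVector_left_ne_zero u w)
  have hwS : nbrExcess G (insert u A) (edgeVector u w) = 0 :=
    nbrExcess_edgeVector_of_mem (mem_insert_self u A) huw (disjoint_nbr hbip hS)
  have hzero : ∀ x ∈ edgeCone G, nbrExcess G (insert u A) x = 0 := fun _ hx ↦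
    hF.map_eq_zero hFS (edgeVector_mem_edgeCone huw) hw hwS hx
  exact hNA (hN ▸ nbr_eq_of_nbrExcess_eq_zero hG hbip hS (insert_nonempty u A) hzero)

theorem nbr_sdiff_nbr_eq_of_isFacet (hG : G.Preconnected)
    (hbip : G.IsBipartiteWith (V₁ : Set V) V₂) (hA : A ⊆ V₁) (hNA : nbr G A ≠ V₂)
    {F : Set (V → ℝ)} (hF : IsFacet (edgeCone G) F) (hFA : ∀ x ∈ F, nbrExcess G A x = 0) :
    nbr G (V₂ \ nbr G A) = V₁ \ A := by
  refine (nbr_sdiff_nbr_subset hbip).antisymm fun u hu ↦ ?_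
  by_contra huN
  exact nbr_insert_ne_of_isFacet hG hbip hA hNA hF hFA hu
    (nbr_insert_of_notMem_nbr_sdiff_nbr hbip (mem_sdiff.1 hu).1 huN)

end NbrExcess

section Balance

variable {V : Type*} [Fintype V] [DecidableEq V] {G : SimpleGraph V} {V₁ V₂ : Finset V}
  {x : V → ℝ}

theorem sum_le_sum_of_isBipartiteWith (hbip : G.IsBipartiteWith (V₁ : Set V) V₂)
    (hx : x ∈ edgeCone G) : ∑ i ∈ V₁, x i ≤ ∑ i ∈ V₂, x i := by
  classical
  calc ∑ i ∈ V₁, x i ≤ ∑ i ∈ nbr G V₁, x i := sum_le_sum_nbr V₁ hx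
    _ ≤ ∑ i ∈ V₂, x i := sum_le_sum_of_subset_of_nonneg (nbr_subset hbip subset_rfl)
      fun i _ _ ↦ nonneg_of_mem_edgeCone hx i

theorem sum_eq_sum_of_isBipartiteWith (hbip : G.IsBipartiteWith (V₁ : Set V) V₂)
    (hx : x ∈ edgeCone G) : ∑ i ∈ V₁, x i = ∑ i ∈ V₂, x i :=
  (sum_le_sum_of_isBipartiteWith hbip hx).antisymm (sum_le_sum_of_isBipartiteWith hbip.symm hx)

end Balance

theorem stmt10_general {V : Type*} [Fintype V] [DecidableEq V] {G : SimpleGraph V}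
    [DecidableRel G.Adj] {V₁ V₂ A : Finset V} (hG : G.Preconnected)
    (hbip : G.IsBipartiteWith (V₁ : Set V) V₂) (hA : A ⊆ V₁)
    (hfacet : IsFacet (edgeCone G)
      ({x : V → ℝ | ∑ i ∈ A, x i = ∑ i ∈ nbr G A, x i} ∩ edgeCone G))
    (hNA : nbr G A ≠ V₂) :
    {x : V → ℝ | ∑ i ∈ A, x i = ∑ i ∈ nbr G A, x i} ∩ edgeCone G =
      {x : V → ℝ | ∑ i ∈ V₂ \ nbr G A, x i =
          ∑ i ∈ nbr G (V₂ \ nbr G A), x i} ∩ edgeCone G ∧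
    nbr G (V₂ \ nbr G A) = V₁ \ A := by
  have hN : nbr G (V₂ \ nbr G A) = V₁ \ A :=
    nbr_sdiff_nbr_eq_of_isFacet hG hbip hA hNA hfacet fun _ hx ↦ nbrExcess_eq_zero_iff.2 hx.1
  refine ⟨?_, hN⟩
  rw [hN]
  ext x
  exact and_congr_left fun hx ↦ sum_eq_sum_iff_sum_sdiff_eq_sum_sdiff hA (nbr_subset hbip hA)
    (sum_eq_sum_of_isBipartiteWith hbip hx)

/-- For a connected bipartite graph `G` with bipartition `(V₁, V₂)`, a proper subset
`A ⊊ V₁` with `F = H_A ∩ ℝ₊𝒜` a facet and `N(A) ⊊ V₂`: then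
`F = H_{V₂ \ N(A)} ∩ ℝ₊𝒜` and `N(V₂ \ N(A)) = V₁ \ A`. -/
theorem stmt10 {n : ℕ} (G : SimpleGraph (Fin n)) [DecidableRel G.Adj]
    (hG : G.Connected)
    (V₁ V₂ : Finset (Fin n)) (hdisj : Disjoint V₁ V₂)
    (hunion : V₁ ∪ V₂ = Finset.univ)
    (hbip : ∀ i j, G.Adj i j → (i ∈ V₁ ∧ j ∈ V₂) ∨ (i ∈ V₂ ∧ j ∈ V₁))
    (A : Finset (Fin n)) (hAsub : A ⊆ V₁) (hAne : A ≠ V₁)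
    (hfacet : IsFacet (edgeCone G)
      ({x : Fin n → ℝ | ∑ i ∈ A, x i = ∑ i ∈ nbr G A, x i} ∩ edgeCone G))
    (hNA : nbr G A ⊂ V₂) :
    {x : Fin n → ℝ | ∑ i ∈ A, x i = ∑ i ∈ nbr G A, x i} ∩ edgeCone G =
      {x : Fin n → ℝ | ∑ i ∈ V₂ \ nbr G A, x i =
          ∑ i ∈ nbr G (V₂ \ nbr G A), x i} ∩ edgeCone G ∧
    nbr G (V₂ \ nbr G A) = V₁ \ A := by
  exact stmt10_general hG.preconnected ⟨disjoint_coe.2 hdisj, hbip⟩ hAsub hfacet hNA.ne
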